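/- arXiv:2502.11548 — 2 statements merged into one kernel-verified Lean document; each statement's English description precedes it below -/
import Mathlib

section
/- Let p be an odd prime and k an odd prime with k | (p−1). The number of subgroups of order k in PSL_2(F_p) is (p² + p)/2. -/
/-- `PSL₂(𝔽ₚ)`, the quotient of `SL₂(𝔽ₚ)` by its center `{±I₂}`. -/
abbrev PSL (p : ℕ) :=
  Matrix.SpecialLinearGroup (Fin 2) (ZMod p) ⧸
    Subgroup.center (Matrix.SpecialLinearGroup (Fin 2) (ZMod p))

namespace PSLaux
open Matrix


theorem pow_formula {F : Type*} [Field F] (M : Matrix (Fin 2) (Fin 2) F) (hdet : M.det = 1)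
    (z : F) (hz : z ≠ 0) (ht : M.trace = z + z⁻¹) (n : ℕ) :
    (z - z⁻¹) • M ^ n = (z ^ n - z⁻¹ ^ n) • M - (z ^ n * z⁻¹ - z⁻¹ ^ n * z) • 1 := by
  have hCH : M * M = (z + z⁻¹) • M - 1 := by
    rw [← ht]
    rw [Matrix.det_fin_two] at hdet
    rw [Matrix.trace_fin_two]
    ext i j
    fin_cases i <;> fin_cases j <;> simp [Matrix.mul_apply, Fin.sum_univ_two]
    · linear_combination -hdet
    · ring
    · ring
    · linear_combination -hdet
  induction n with
  | zero =>
    ext i j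
    simp [Matrix.smul_apply]
    ring
  | succ n ih =>
    rw [pow_succ, ← Matrix.smul_mul, ih, sub_mul, Matrix.smul_mul, Matrix.smul_mul, hCH, one_mul]
    have : z * z⁻¹ = 1 := mul_inv_cancel₀ hz
    ext i j
    simp only [Matrix.smul_apply, Matrix.sub_apply, smul_eq_mul]
    generalize M i j = m
    generalize (1 : Matrix (Fin 2) (Fin 2) F) i j = e
    generalize z⁻¹ = y at *
    rw [pow_succ, pow_succ]
    linear_combination (-(z ^ n - y ^ n) * e) * this * (-1)

theorem trace_pow_formula {F : Type*} [Field F] (M : Matrix (Fin 2) (Fin 2) F) (hdet : M.det = 1)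
    (z : F) (hz : z ≠ 0) (hz2 : z - z⁻¹ ≠ 0) (ht : M.trace = z + z⁻¹) (n : ℕ) :
    (M ^ n).trace = z ^ n + z⁻¹ ^ n := by
  have h := congrArg Matrix.trace (pow_formula M hdet z hz ht n)
  rw [Matrix.trace_smul, Matrix.trace_sub, Matrix.trace_smul, Matrix.trace_smul, ht,
    Matrix.trace_one] at h
  apply mul_left_cancel₀ hz2
  simp only [smul_eq_mul, Fintype.card_fin] at h
  rw [h]
  push_cast
  ring

theorem pow_eq_one_of_trace {F : Type*} [Field F] (M : Matrix (Fin 2) (Fin 2) F) (hdet : M.det = 1)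
    (z : F) (hz : z ≠ 0) (hz2 : z - z⁻¹ ≠ 0) (ht : M.trace = z + z⁻¹) (n : ℕ) (hn : z ^ n = 1) :
    M ^ n = 1 := by
  have h := pow_formula M hdet z hz ht n
  rw [inv_pow, hn] at h
  simp only [inv_one, sub_self, zero_smul, one_mul, zero_sub, ← neg_smul, neg_sub] at h
  exact smul_right_injective _ hz2 h

/-- an element of order k has an eigenvalue that is a primitive k-th root of unity -/
theorem exists_root {F : Type*} [Field F] (M : Matrix (Fin 2) (Fin 2) F) (hdet : M.det = 1)
    (k : ℕ) (hk : k.Prime) (z : F) (hz : IsPrimitiveRoot z k) (hM : M ^ k = 1) (hM1 : M ≠ 1) :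
    ∃ w : F, IsPrimitiveRoot w k ∧ M.trace = w + w⁻¹ := by
  classical
  by_contra! hcon
  apply hM1
  have h1 : (Polynomial.aeval M) (Polynomial.cyclotomic k F * (Polynomial.X - 1)) = 0 := by
    haveI := Fact.mk hk
    rw [Polynomial.cyclotomic_prime_mul_X_sub_one]
    simp [hM]
  rw [map_mul] at h1
  have hu : IsUnit ((Polynomial.aeval M) (Polynomial.cyclotomic k F)) := by
    rw [Polynomial.cyclotomic_eq_prod_X_sub_primitiveRoots hz, Matrix.isUnit_iff_isUnit_det]
    have h2 : ∀ s : Finset F, (∀ w ∈ s, IsPrimitiveRoot w k) →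
        IsUnit ((Polynomial.aeval M) (∏ w ∈ s, (Polynomial.X - Polynomial.C w))) := by
      intro s
      induction s using Finset.induction_on with
      | empty => simp
      | insert a s ha ih =>
        intro hs
        rw [Finset.prod_insert ha, map_mul]
        refine IsUnit.mul ?_ (ih fun w hw => hs w (Finset.mem_insert_of_mem hw))
        have hap := hs a (Finset.mem_insert_self _ _)
        have hne := hcon a hap
        have ha0 : a ≠ 0 := hap.ne_zero hk.ne_zero
        rw [Matrix.isUnit_iff_isUnit_det, isUnit_iff_ne_zero]
        intro h0
        apply hne
        rw [Matrix.det_fin_two] at h0 hdet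
        simp [Matrix.algebraMap_matrix_apply] at h0
        rw [Matrix.trace_fin_two]
        field_simp
        linear_combination hdet - h0
    rw [← Matrix.isUnit_iff_isUnit_det]
    exact h2 _ fun w hw => (mem_primitiveRoots hk.pos).1 hw
  have := (hu.mul_right_eq_zero).1 h1
  simpa [sub_eq_zero] using this

theorem center_sq {p : ℕ} [Fact p.Prime] (A : Matrix.SpecialLinearGroup (Fin 2) (ZMod p)) (hA : A ∈ Subgroup.center (Matrix.SpecialLinearGroup (Fin 2) (ZMod p))) :
    A ^ 2 = 1 := by
  rw [Matrix.SpecialLinearGroup.mem_center_iff] at hA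
  obtain ⟨r, hr, h⟩ := hA
  apply Subtype.ext
  rw [Matrix.SpecialLinearGroup.coe_pow, ← h, ← map_pow]
  rw [Fintype.card_fin] at hr
  rw [hr, map_one]
  rfl

theorem eq_one_of_two_odd {G : Type*} [Group G] (c : G) (k : ℕ) (hk : Odd k) (h2 : c ^ 2 = 1)
    (h : c ^ k = 1) : c = 1 := by
  obtain ⟨m, rfl⟩ := hk
  rwa [pow_succ, pow_mul, h2, one_pow, one_mul] at h

theorem card_X {p : ℕ} [Fact p.Prime] (z : ZMod p) (hz : z ≠ 0) (hz2 : z - z⁻¹ ≠ 0) :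
    Nat.card {A : Matrix.SpecialLinearGroup (Fin 2) (ZMod p) // (A : Matrix (Fin 2) (Fin 2) (ZMod p)).trace = z + z⁻¹} = p ^ 2 + p := by
  have hp := (Fact.out : p.Prime)
  have hzz : z * z⁻¹ = 1 := mul_inv_cancel₀ hz
  let f : ((ZMod p)ˣ × ZMod p) ⊕ (Bool × ZMod p) →
      {A : Matrix.SpecialLinearGroup (Fin 2) (ZMod p) // (A : Matrix (Fin 2) (Fin 2) (ZMod p)).trace = z + z⁻¹} := fun x =>
    match x with
    | .inl (b, a) => ⟨⟨!![a, b; (a * (z + z⁻¹ - a) - 1) * (b⁻¹ : (ZMod p)ˣ), z + z⁻¹ - a], by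
        rw [Matrix.det_fin_two_of]
        have : (b : ZMod p) * (b⁻¹ : (ZMod p)ˣ) = 1 := b.mul_inv
        linear_combination (-(a * (z + z⁻¹ - a) - 1)) * this⟩, by
        change Matrix.trace !![a, (b : ZMod p); _, z + z⁻¹ - a] = _
        rw [Matrix.trace_fin_two_of]; ring⟩
    | .inr (true, c) => ⟨⟨!![z, 0; c, z⁻¹], by simp [Matrix.det_fin_two_of, hzz]⟩, by
        simp [Matrix.trace_fin_two]⟩
    | .inr (false, c) => ⟨⟨!![z⁻¹, 0; c, z], by simp [Matrix.det_fin_two_of, hz]⟩, by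
        simp [Matrix.trace_fin_two, add_comm]⟩
  have hf : Function.Bijective f := by
    constructor
    · intro x y hxy
      have h1 := congrArg (fun A => A.1.1 0 0) hxy
      have h2 := congrArg (fun A => A.1.1 0 1) hxy
      have h3 := congrArg (fun A => A.1.1 1 0) hxy
      have hne : z ≠ z⁻¹ := sub_ne_zero.1 hz2
      rcases x with ⟨b, a⟩ | ⟨_ | _, c⟩ <;> rcases y with ⟨b', a'⟩ | ⟨_ | _, c'⟩
      · have e1 : a = a' := h1
        have e2 : b = b' := Units.ext h2
        rw [e1, e2]
      · exact absurd h2 b.ne_zero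
      · exact absurd h2 b.ne_zero
      · exact absurd h2.symm b'.ne_zero
      · have e3 : c = c' := h3
        rw [e3]
      · exact absurd h1.symm hne
      · exact absurd h2.symm b'.ne_zero
      · exact absurd h1 hne
      · have e3 : c = c' := h3
        rw [e3]
    · rintro ⟨⟨M, hM⟩, ht⟩
      have ht' : M 0 0 + M 1 1 = z + z⁻¹ := by simpa [Matrix.trace_fin_two] using ht
      have hd : M 0 0 * M 1 1 - M 0 1 * M 1 0 = 1 := by rw [← Matrix.det_fin_two]; exact hM
      by_cases hb : M 0 1 = 0
      · have h0 : (M 0 0 - z) * (M 0 0 - z⁻¹) = 0 := by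
          rw [hb] at hd
          linear_combination (M 0 0) * ht' - hd + hzz
        rcases mul_eq_zero.1 h0 with h | h
        · refine ⟨.inr (true, M 1 0), ?_⟩
          apply Subtype.ext; apply Subtype.ext
          rw [sub_eq_zero] at h
          rw [h] at ht'
          ext i j
          fin_cases i <;> fin_cases j <;> simp [f, hb, h]
          linear_combination -ht'
        · refine ⟨.inr (false, M 1 0), ?_⟩
          apply Subtype.ext; apply Subtype.ext
          rw [sub_eq_zero] at h
          rw [h] at ht'
          ext i j
          fin_cases i <;> fin_cases j <;> simp [f, hb, h]
          linear_combination -ht'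
      · refine ⟨.inl (Units.mk0 _ hb, M 0 0), ?_⟩
        apply Subtype.ext; apply Subtype.ext
        ext i j
        fin_cases i <;> fin_cases j <;> simp [f]
        · rw [mul_inv_eq_iff_eq_mul₀ hb]
          linear_combination hd - (M 0 0) * ht'
        · linear_combination -ht'
  rw [← Nat.card_congr (Equiv.ofBijective f hf), Nat.card_sum, Nat.card_prod, Nat.card_prod,
    Nat.card_eq_fintype_card, ZMod.card_units_eq_totient, Nat.totient_prime hp]
  simp
  obtain ⟨m, rfl⟩ : ∃ m, p = m + 1 := ⟨p - 1, by have := hp.pos; omega⟩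
  simp
  ring

end PSLaux

open PSLaux
theorem stmt12 (p k : ℕ) [Fact p.Prime] [Fact k.Prime] (hp : Odd p) (hk : Odd k)
    (hdvd : k ∣ p - 1) :
    Nat.card {H : Subgroup (PSL p) // Nat.card H = k} = (p ^ 2 + p) / 2 := by
  classical
  have hkp : k.Prime := Fact.out
  have hpp : p.Prime := Fact.out
  -- primitive root
  obtain ⟨z, hz⟩ : ∃ z : ZMod p, IsPrimitiveRoot z k := by
    obtain ⟨g, hg⟩ := IsCyclic.exists_ofOrder_eq_natCard (α := (ZMod p)ˣ)
    rw [Nat.card_eq_fintype_card, ZMod.card_units_eq_totient, Nat.totient_prime hpp] at hg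
    obtain ⟨m, hm⟩ := hdvd
    have h1 : IsPrimitiveRoot g (p - 1) := hg ▸ IsPrimitiveRoot.orderOf g
    have h2 := h1.pow (by have := hpp.two_le; omega) (hm.trans (mul_comm _ _))
    exact ⟨_, h2.map_of_injective (f := Units.coeHom (ZMod p)) Units.val_injective⟩
  have key0 : ∀ w : ZMod p, IsPrimitiveRoot w k → w ≠ 0 := fun w hw => hw.ne_zero hkp.ne_zero
  have key2 : ∀ w : ZMod p, IsPrimitiveRoot w k → w - w⁻¹ ≠ 0 := by
    intro w hw h
    have hw0 := key0 w hw
    have hw2 : w ^ 2 = 1 := by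
      field_simp at h
      linear_combination h
    have := (hw.dvd_of_pow_eq_one 2 hw2)
    have h2 := (Nat.prime_dvd_prime_iff_eq hkp Nat.prime_two).1 this
    rw [h2] at hk
    exact absurd hk (by decide)
  have hz0 := key0 z hz
  have hz2 := key2 z hz
  -- powers
  have hpow : ∀ A : Matrix.SpecialLinearGroup (Fin 2) (ZMod p),
      A.1.trace = z + z⁻¹ → A ^ k = 1 := by
    intro A hA
    apply Subtype.ext
    rw [Matrix.SpecialLinearGroup.coe_pow]
    exact pow_eq_one_of_trace A.1 A.2 z hz0 hz2 hA k hz.pow_eq_one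
  have hne1 : ∀ A : Matrix.SpecialLinearGroup (Fin 2) (ZMod p),
      A.1.trace = z + z⁻¹ → A ≠ 1 := by
    rintro A hA rfl
    have h : (2 : ZMod p) = z + z⁻¹ := by
      rw [← hA]; simp
    have h1 : (z - 1) ^ 2 = 0 := by
      field_simp at h
      linear_combination -h
    exact hz.ne_one hkp.one_lt (sub_eq_zero.1 (pow_eq_zero_iff (two_ne_zero) |>.1 h1))
  have hcen : ∀ A : Matrix.SpecialLinearGroup (Fin 2) (ZMod p),
      A ∈ Subgroup.center (Matrix.SpecialLinearGroup (Fin 2) (ZMod p)) → A ^ k = 1 → A = 1 :=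
    fun A hA h => eq_one_of_two_odd A k hk (center_sq A hA) h
  have hord : ∀ A : Matrix.SpecialLinearGroup (Fin 2) (ZMod p),
      A.1.trace = z + z⁻¹ → orderOf (A : PSL p) = k := by
    intro A hA
    apply orderOf_eq_prime
    · rw [← QuotientGroup.mk_pow, hpow A hA]; rfl
    · intro h
      exact hne1 A hA (hcen A ((QuotientGroup.eq_one_iff A).1 h) (hpow A hA))
  let X := {A : Matrix.SpecialLinearGroup (Fin 2) (ZMod p) // A.1.trace = z + z⁻¹}
  let S := {H : Subgroup (PSL p) // Nat.card H = k}
  let f : X → S := fun A => ⟨Subgroup.zpowers (A.1 : PSL p), by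
    rw [Nat.card_zpowers, hord A.1 A.2]⟩
  have hcardX : Nat.card X = p ^ 2 + p := card_X z hz0 hz2
  haveI : Finite (PSL p) := Quotient.finite _
  haveI : Fintype X := Fintype.ofFinite X
  haveI : Fintype S := Fintype.ofFinite S
  -- surjectivity
  have hsurj : Function.Surjective f := by
    rintro ⟨H, hH⟩
    haveI : Nontrivial H := Finite.one_lt_card_iff_nontrivial.1 (hH ▸ hkp.one_lt)
    obtain ⟨⟨h, hhH⟩, hh1⟩ := exists_ne (1 : H)
    have hh1' : h ≠ 1 := fun h' => hh1 (Subtype.ext h')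
    have hhk : h ^ k = 1 := by
      have := pow_card_eq_one' (x := (⟨h, hhH⟩ : H))
      rw [hH] at this
      exact congrArg Subtype.val this
    obtain ⟨B, rfl⟩ := QuotientGroup.mk_surjective h
    have hBk : B ^ k ∈ Subgroup.center _ := by
      rw [← QuotientGroup.eq_one_iff, QuotientGroup.mk_pow]; exact hhk
    have hC : (B ^ 2) ^ k = 1 := by rw [pow_right_comm]; exact center_sq _ hBk
    have hC1 : B ^ 2 ≠ 1 := by
      intro h
      apply hh1'
      apply eq_one_of_two_odd _ k hk _ hhk
      rw [← QuotientGroup.mk_pow, h]; rfl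
    obtain ⟨w, hw, htr⟩ := exists_root (B ^ 2).1 (B ^ 2).2 k hkp z hz
      (by rw [← Matrix.SpecialLinearGroup.coe_pow, hC]; rfl) (fun h => hC1 (Subtype.ext h))
    obtain ⟨j, -, hj⟩ := hw.eq_pow_of_pow_eq_one hz.pow_eq_one
    have htA : ((B ^ 2) ^ j).1.trace = z + z⁻¹ := by
      rw [Matrix.SpecialLinearGroup.coe_pow,
        trace_pow_formula _ (B ^ 2).2 w (key0 w hw) (key2 w hw) htr j, inv_pow, hj]
    refine ⟨⟨(B ^ 2) ^ j, htA⟩, ?_⟩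
    apply Subtype.ext
    apply Subgroup.eq_of_le_of_card_ge
    · show Subgroup.zpowers _ ≤ H
      rw [Subgroup.zpowers_le]
      exact H.pow_mem (H.pow_mem hhH 2) j
    · rw [hH, (f _).2]
  -- fibers
  have hfib : ∀ s ∈ (Finset.univ : Finset S),
      (Finset.univ.filter fun A : X => f A = s).card = 2 := by
    intro s _
    obtain ⟨A, rfl⟩ := hsurj s
    have hAinv : (A.1⁻¹).1.trace = z + z⁻¹ := by
      refine Eq.trans ?_ A.2
      rw [Matrix.SpecialLinearGroup.coe_inv, Matrix.adjugate_fin_two, Matrix.trace_fin_two_of,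
        Matrix.trace_fin_two, add_comm]
    rw [Finset.card_eq_two]
    refine ⟨A, ⟨A.1⁻¹, hAinv⟩, ?_, ?_⟩
    · intro h
      have h' : A.1 = A.1⁻¹ := congrArg Subtype.val h
      apply hne1 A.1 A.2
      apply eq_one_of_two_odd _ k hk _ (hpow A.1 A.2)
      rw [pow_two]
      exact mul_eq_one_iff_eq_inv.2 h'
    · ext A'
      simp only [Finset.mem_filter, Finset.mem_univ, true_and, Finset.mem_insert,
        Finset.mem_singleton]
      constructor
      · intro h
        have h1 : Subgroup.zpowers (A'.1 : PSL p) = Subgroup.zpowers (A.1 : PSL p) :=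
          congrArg Subtype.val h
        have h2 : (A'.1 : PSL p) ∈ Subgroup.zpowers (A.1 : PSL p) := by
          rw [← h1]; exact Subgroup.mem_zpowers _
        rw [← mem_powers_iff_mem_zpowers] at h2
        obtain ⟨j, hj⟩ := h2
        have hj' : ((A.1 ^ j : Matrix.SpecialLinearGroup (Fin 2) (ZMod p)) : PSL p) = A'.1 := hj
        rw [QuotientGroup.eq] at hj'
        have h3 : (A.1 ^ j)⁻¹ * A'.1 = 1 := by
          apply hcen _ hj'
          have hcomm : Commute (A.1 ^ j)⁻¹ A'.1 := by
            have e : A'.1 = (A.1 ^ j) * ((A.1 ^ j)⁻¹ * A'.1) := by group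
            rw [e]
            apply Commute.mul_right
            · exact (Commute.refl _).inv_left
            · exact (Subgroup.mem_center_iff.1 hj' _)
          rw [hcomm.mul_pow, hpow _ A'.2, inv_pow, pow_right_comm, hpow _ A.2]
          simp
        have h4 : A'.1 = A.1 ^ j := (inv_mul_eq_one.1 h3).symm
        have h5 : z ^ j + (z ^ j)⁻¹ = z + z⁻¹ := by
          rw [← inv_pow, ← trace_pow_formula _ A.1.2 z hz0 hz2 A.2 j,
            ← Matrix.SpecialLinearGroup.coe_pow, ← h4, A'.2]
        have hzj : z ^ j ≠ 0 := pow_ne_zero _ hz0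
        have h6 : (z ^ j - z) * (z ^ j * z - 1) = 0 := by
          field_simp at h5
          linear_combination h5
        rcases mul_eq_zero.1 h6 with h | h
        · left
          apply Subtype.ext
          rw [h4]
          have e1 : (k - 1) + 1 = k := Nat.sub_add_cancel hkp.pos
          have : k ∣ (k - 1) + j := hz.dvd_of_pow_eq_one _ (by
            rw [pow_add, sub_eq_zero.1 h, ← pow_succ, e1, hz.pow_eq_one])
          obtain ⟨m, hm⟩ := this
          apply mul_left_cancel (a := A.1 ^ (k - 1))
          rw [← pow_add, hm, ← pow_succ, e1, pow_mul, hpow _ A.2, one_pow]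
        · right
          apply Subtype.ext
          show A'.1 = A.1⁻¹
          rw [h4, ← mul_eq_one_iff_eq_inv, ← pow_succ]
          have : k ∣ j + 1 := hz.dvd_of_pow_eq_one _ (by rw [pow_succ]; exact sub_eq_zero.1 h)
          obtain ⟨m, hm⟩ := this
          rw [hm, pow_mul, hpow _ A.2, one_pow]
      · rintro (rfl | rfl)
        · rfl
        · apply Subtype.ext
          show Subgroup.zpowers ((A.1⁻¹ : Matrix.SpecialLinearGroup (Fin 2) (ZMod p)) : PSL p) = _
          rw [QuotientGroup.mk_inv, Subgroup.zpowers_inv]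
  have hcount := Finset.card_eq_sum_card_fiberwise (f := f) (s := Finset.univ) (t := Finset.univ)
    (fun _ _ => by simp)
  rw [Finset.sum_congr rfl hfib, Finset.sum_const, Finset.card_univ, Finset.card_univ,
    ← Nat.card_eq_fintype_card, ← Nat.card_eq_fintype_card, hcardX, smul_eq_mul] at hcount
  show Nat.card S = _
  omega
end

section
/- Let p be an odd prime and k an odd prime with k | (p+1). The number of subgroups of order k in PSL_2(F_p) is (p² − p)/2. -/
theorem aux_eig {K : Type*} [Field K] (A : Matrix (Fin 2) (Fin 2) K) (l : K)
    (n : ℕ) (h : l ^ 2 - A.trace * l + A.det = 0) :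
    (l ^ n) ^ 2 - (A ^ n).trace * l ^ n + (A ^ n).det = 0 := by
  have key : ∀ (B : Matrix (Fin 2) (Fin 2) K) (m : K),
      (B - Matrix.scalar (Fin 2) m).det = m ^ 2 - B.trace * m + B.det := by
    intro B m
    simp [Matrix.det_fin_two, Matrix.trace_fin_two]
    ring
  rw [← key] at h ⊢
  have hc : Commute A (Matrix.scalar (Fin 2) l) :=
    (Matrix.scalar_commute l (Commute.all l) A).symm
  obtain ⟨C, hC⟩ := hc.sub_dvd_pow_sub_pow n
  rw [map_pow, hC, Matrix.det_mul, h, zero_mul]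

/-- powers depend only on trace -/
theorem aux_pow {K : Type*} [Field K] (t : K) (n : ℕ) : ∃ u w : K,
    ∀ A : Matrix (Fin 2) (Fin 2) K, A.trace = t → A.det = 1 →
      A ^ n = u • A + w • (1 : Matrix (Fin 2) (Fin 2) K) := by
  induction n with
  | zero => exact ⟨0, 1, by simp⟩
  | succ n ih =>
    obtain ⟨u, w, h⟩ := ih
    refine ⟨u * t + w, -u, fun A ht hd => ?_⟩
    have ch : A * A = t • A - (1 : Matrix (Fin 2) (Fin 2) K) := by
      rw [Matrix.trace_fin_two] at ht
      rw [Matrix.det_fin_two] at hd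
      ext i j
      fin_cases i <;> fin_cases j <;> simp [Matrix.mul_apply, Fin.sum_univ_two] <;> grind
    rw [pow_succ, h A ht hd, add_mul, smul_mul_assoc, ch, smul_mul_assoc, one_mul]
    module

theorem aux_comm {K : Type*} [Field K] (h2 : (2 : K) ≠ 0) (t : K) (hns : ¬ IsSquare (t ^ 2 - 4))
    (A B : Matrix.SpecialLinearGroup (Fin 2) K) (hA : A.1.trace = t) (hB : B.1.trace = t)
    (h : A * B = B * A) : B = A ∨ B = A⁻¹ := by
  have hAd := A.2
  have hBd := B.2
  rw [Matrix.trace_fin_two] at hA hB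
  rw [Matrix.det_fin_two] at hAd hBd
  have h' : A.1 * B.1 = B.1 * A.1 := congrArg Subtype.val h
  have e00 := congrFun (congrFun h' 0) 0
  have e10 := congrFun (congrFun h' 1) 0
  simp only [Matrix.mul_apply, Fin.sum_univ_two] at e00 e10
  set a := A.1 0 0 with ha
  set b := A.1 0 1 with hb
  set c := A.1 1 0 with hc
  set d := A.1 1 1 with hd
  set a' := B.1 0 0 with ha'
  set b' := B.1 0 1 with hb'
  set c' := B.1 1 0 with hc'
  set d' := B.1 1 1 with hd'
  have hD : t ^ 2 - 4 ≠ 0 := fun h0 => hns (h0 ▸ IsSquare.zero)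
  have hc0 : c ≠ 0 := by
    intro h0
    apply hns
    refine ⟨2 * a - t, ?_⟩
    grind
  have f1 : (2 * a - t) * c' = (2 * a' - t) * c := by grind
  have f2 : b * c' = b' * c := by grind
  have f3 : (2 * a - t) ^ 2 + 4 * b * c = t ^ 2 - 4 := by grind
  have f4 : (2 * a' - t) ^ 2 + 4 * b' * c' = t ^ 2 - 4 := by grind
  have f5 : c' ^ 2 * (t ^ 2 - 4) = c ^ 2 * (t ^ 2 - 4) := by
    linear_combination (-c' ^ 2) * f3 + c ^ 2 * f4 + ((2 * a - t) * c' + (2 * a' - t) * c) * f1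
      + 4 * c' * c * f2
  rcases sq_eq_sq_iff_eq_or_eq_neg.1 (mul_right_cancel₀ hD f5) with g | g
  · left
    rw [g] at f1 f2
    have g1 : a' = a := by
      have := mul_right_cancel₀ hc0 f1
      exact mul_left_cancel₀ h2 (by linear_combination -this)
    have g2 := mul_right_cancel₀ hc0 f2
    ext i j
    fin_cases i <;> fin_cases j
    · exact g1
    · exact g2.symm
    · exact g
    · change d' = d
      linear_combination hB - hA - g1
  · right
    rw [g] at f1 f2
    have g1 : a' = d := by
      have : -(2 * a - t) = 2 * a' - t := mul_right_cancel₀ hc0 (by linear_combination f1)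
      exact mul_left_cancel₀ h2 (by linear_combination -this - 2 * hA)
    have g2 : -b = b' := mul_right_cancel₀ hc0 (by linear_combination f2)
    ext i j
    rw [Matrix.SpecialLinearGroup.coe_inv, Matrix.adjugate_fin_two]
    fin_cases i <;> fin_cases j
    · exact g1
    · exact g2.symm
    · exact g
    · change d' = a
      linear_combination hB - hA - g1

theorem aux_count (p : ℕ) [Fact p.Prime] (t : ZMod p) (hns : ¬ IsSquare (t ^ 2 - 4)) :
    Nat.card {A : Matrix.SpecialLinearGroup (Fin 2) (ZMod p) // A.1.trace = t} = p * (p - 1) := by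
  have hf : ∀ a : ZMod p, a * (t - a) - 1 ≠ 0 := by
    intro a h
    exact hns ⟨2 * a - t, by linear_combination 4 * h⟩
  have e : {A : Matrix.SpecialLinearGroup (Fin 2) (ZMod p) // A.1.trace = t} ≃
      ZMod p × (ZMod p)ˣ :=
    { toFun := fun A => (A.1.1 0 0, Units.mk0 (A.1.1 0 1) (by
        intro h
        have h1 := A.1.2
        have h2 := A.2
        rw [Matrix.det_fin_two] at h1
        rw [Matrix.trace_fin_two] at h2
        rw [h] at h1
        apply hf (A.1.1 0 0)
        linear_combination h1 - A.1.1 0 0 * h2))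
      invFun := fun x => ⟨⟨!![x.1, x.2; (x.1 * (t - x.1) - 1) * (x.2 : ZMod p)⁻¹, t - x.1], by
        rw [Matrix.det_fin_two_of]
        have := x.2.ne_zero
        field_simp
        ring⟩, by
        rw [Matrix.trace_fin_two_of]; ring⟩
      left_inv := by
        rintro ⟨A, hA⟩
        have h1 := A.2
        have h2 := hA
        rw [Matrix.det_fin_two] at h1
        rw [Matrix.trace_fin_two] at h2
        have hb : A.1 0 1 ≠ 0 := by
          intro h
          rw [h] at h1
          apply hf (A.1 0 0)
          linear_combination h1 - A.1 0 0 * h2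
        apply Subtype.ext
        ext i j
        fin_cases i <;> fin_cases j
        · rfl
        · rfl
        · change (A.1 0 0 * (t - A.1 0 0) - 1) * (A.1 0 1)⁻¹ = A.1 1 0
          field_simp
          linear_combination h1 - A.1 0 0 * h2
        · change t - A.1 0 0 = A.1 1 1
          linear_combination -h2
      right_inv := by
        rintro ⟨a, b⟩
        exact Prod.ext rfl (Units.ext rfl) }
  rw [Nat.card_congr e, Nat.card_prod, Nat.card_zmod, Nat.card_eq_fintype_card,
    ZMod.card_units]

theorem aux_gcd (p k : ℕ) [Fact p.Prime] [Fact k.Prime] (hk : Odd k)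
    (hdvd : k ∣ p + 1) (x : ZMod p) (hx : x ^ k = 1) : x = 1 := by
  have hkp : k.Prime := Fact.out
  have hpp : p.Prime := Fact.out
  have hx0 : x ≠ 0 := by
    rintro rfl
    rw [zero_pow hkp.ne_zero] at hx
    exact zero_ne_one hx
  have h1 := ZMod.pow_card_sub_one_eq_one hx0
  have hc : Nat.Coprime k (p - 1) := by
    rw [Nat.Prime.coprime_iff_not_dvd hkp]
    intro h
    have h2 : k ∣ (p + 1) - (p - 1) := Nat.dvd_sub hdvd h
    have : p + 1 - (p - 1) = 2 := by have := hpp.two_le; omega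
    rw [this] at h2
    have := (Nat.prime_dvd_prime_iff_eq hkp Nat.prime_two).1 h2
    subst this
    exact absurd hk (by decide)
  have := orderOf_dvd_of_pow_eq_one hx
  have h3 := Nat.dvd_gcd this (orderOf_dvd_of_pow_eq_one h1)
  rw [hc.gcd_eq_one, Nat.dvd_one, orderOf_eq_one_iff] at h3
  exact h3

theorem aux_exists (p k : ℕ) [Fact p.Prime] [Fact k.Prime] (hk : Odd k)
    (hdvd : k ∣ p + 1) : ∃ A : Matrix.SpecialLinearGroup (Fin 2) (ZMod p), A ^ k = 1 ∧ A ≠ 1 := by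
  have hkp : k.Prime := Fact.out
  have hd : k ∣ Nat.card (Matrix.GeneralLinearGroup (Fin 2) (ZMod p)) := by
    rw [Matrix.card_GL_field, Fin.prod_univ_two]
    apply Dvd.dvd.mul_right
    simp only [ZMod.card, Fin.val_zero, pow_zero]
    have : p ^ 2 - 1 = (p + 1) * (p - 1) := by
      simpa using Nat.sq_sub_sq p 1
    rw [this]
    exact Dvd.dvd.mul_right hdvd _
  obtain ⟨g, hg⟩ := exists_prime_orderOf_dvd_card' k hd
  have hgk : g ^ k = 1 := hg ▸ pow_orderOf_eq_one g
  have hgk' : g.1 ^ k = 1 := by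
    simpa using congrArg Units.val hgk
  obtain ⟨A, hA⟩ : ∃ A : Matrix.SpecialLinearGroup (Fin 2) (ZMod p), A.1 = g.1 :=
    ⟨⟨g.1, aux_gcd p k hk hdvd _ (by rw [← Matrix.det_pow, hgk', Matrix.det_one])⟩, rfl⟩
  refine ⟨A, ?_, ?_⟩
  · apply Subtype.ext
    rw [Matrix.SpecialLinearGroup.coe_pow, hA]
    exact hgk'
  · intro h
    have h' : g.1 = 1 := by rw [← hA, h]; rfl
    have : g = 1 := Units.ext h'
    rw [this, orderOf_one] at hg
    exact hkp.one_lt.ne hg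

theorem aux_kne (p k : ℕ) [Fact p.Prime] [Fact k.Prime] 
    (hdvd : k ∣ p + 1) : (k : ZMod p) ≠ 0 := by
  have hkp : k.Prime := Fact.out
  have hpp : p.Prime := Fact.out
  rw [Ne, ZMod.natCast_eq_zero_iff, Nat.prime_dvd_prime_iff_eq hpp hkp]
  rintro rfl
  have := (Nat.dvd_add_right (dvd_refl p)).1 hdvd
  exact hpp.one_lt.ne' (Nat.dvd_one.1 this)

theorem aux_nonsq (p k : ℕ) [Fact p.Prime] [Fact k.Prime] (h2 : (2 : ZMod p) ≠ 0) (hk : Odd k)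
    (hdvd : k ∣ p + 1) (A : Matrix.SpecialLinearGroup (Fin 2) (ZMod p)) (hA : A ^ k = 1)
    (hA1 : A ≠ 1) : ¬ IsSquare (A.1.trace ^ 2 - 4) := by
  rintro ⟨s, hs⟩
  have hAk : A.1 ^ k = 1 := by simpa using congrArg Subtype.val hA
  set l : ZMod p := (A.1.trace + s) / 2 with hl
  have hl2 : 2 * l = A.1.trace + s := by rw [hl]; field_simp
  have h4 : (4 : ZMod p) ≠ 0 := by
    have : (4 : ZMod p) = 2 * 2 := by norm_num
    rw [this]; exact mul_ne_zero h2 h2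
  have hroot : l ^ 2 - A.1.trace * l + A.1.det = 0 := by
    rw [A.2]
    apply mul_left_cancel₀ h4
    linear_combination (2 * l - A.1.trace + s) * hl2 - hs
  have h5 := aux_eig A.1 l k hroot
  rw [hAk, Matrix.trace_one, Matrix.det_one] at h5
  have h6 : (l ^ k - 1) ^ 2 = 0 := by
    rw [← h5]; simp; ring
  have h7 : l = 1 := aux_gcd p k hk hdvd l (sub_eq_zero.1 (pow_eq_zero_iff (by norm_num) |>.1 h6))
  rw [h7, A.2] at hroot
  have ht : A.1.trace = 2 := by linear_combination -hroot
  have hpow : ∀ n : ℕ, A.1 ^ n = 1 + (n : ZMod p) • (A.1 - 1) := by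
    have hd := A.2
    rw [Matrix.trace_fin_two] at ht
    rw [Matrix.det_fin_two] at hd
    have ch : A.1 * A.1 = (2 : ZMod p) • A.1 - 1 := by
      ext i j
      fin_cases i <;> fin_cases j <;> simp [Matrix.mul_apply, Fin.sum_univ_two] <;> grind
    intro n
    induction n with
    | zero => simp
    | succ n ih =>
      rw [pow_succ, ih, add_mul, smul_mul_assoc, sub_mul, ch, one_mul]
      push_cast
      module
  have h8 := hpow k
  rw [hAk, left_eq_add, smul_eq_zero] at h8
  rcases h8 with h8 | h8
  · exact aux_kne p k hdvd h8
  · exact hA1 (Subtype.ext (sub_eq_zero.1 h8))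

theorem aux_trace (p k : ℕ) [Fact p.Prime] [Fact k.Prime]
    (A B : Matrix.SpecialLinearGroup (Fin 2) (ZMod p)) (hA : A ^ k = 1) (hB : B ^ k = 1)
    (hAs : ¬ IsSquare (A.1.trace ^ 2 - 4)) (hBs : ¬ IsSquare (B.1.trace ^ 2 - 4)) :
    ∃ i : ℕ, (A ^ i).1.trace = B.1.trace := by
  have hkp : k.Prime := Fact.out
  let K := AlgebraicClosure (ZMod p)
  let f : ZMod p →+* K := algebraMap (ZMod p) K
  have main : ∀ C : Matrix.SpecialLinearGroup (Fin 2) (ZMod p), C ^ k = 1 →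
      ¬ IsSquare (C.1.trace ^ 2 - 4) → ∃ l : K, l ^ 2 - f C.1.trace * l + 1 = 0 ∧
        IsPrimitiveRoot l k ∧ ∀ i : ℕ, (l ^ i) ^ 2 - f (C ^ i).1.trace * l ^ i + 1 = 0 := by
    intro C hC hCs
    obtain ⟨l, hl⟩ := IsAlgClosed.exists_root
      (Polynomial.X ^ 2 - Polynomial.C (f C.1.trace) * Polynomial.X + 1 : Polynomial K) (by
        have : (Polynomial.X ^ 2 - Polynomial.C (f C.1.trace) * Polynomial.X + 1
          : Polynomial K).degree = 2 := by compute_degree!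
        rw [this]; norm_num)
    simp [Polynomial.IsRoot] at hl
    have hpow : ∀ i : ℕ, (l ^ i) ^ 2 - f (C ^ i).1.trace * l ^ i + 1 = 0 := by
      intro i
      have tr : ∀ D : Matrix.SpecialLinearGroup (Fin 2) (ZMod p),
          (f.mapMatrix D.1).trace = f D.1.trace := by
        intro D; simp [Matrix.trace_fin_two]
      have dt : ∀ D : Matrix.SpecialLinearGroup (Fin 2) (ZMod p),
          (f.mapMatrix D.1).det = 1 := by
        intro D; rw [← RingHom.map_det, D.2, map_one]
      have := aux_eig (f.mapMatrix C.1) l i (by rw [tr, dt]; exact hl)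
      rw [← map_pow, ← Matrix.SpecialLinearGroup.coe_pow, tr, dt] at this
      exact this
    refine ⟨l, hl, ?_, hpow⟩
    have hk1 := hpow k
    rw [hC] at hk1
    have h2' : f (1 : Matrix.SpecialLinearGroup (Fin 2) (ZMod p)).1.trace = 2 := by
      rw [Matrix.SpecialLinearGroup.coe_one, Matrix.trace_one, Fintype.card_fin]
      exact map_natCast f 2
    rw [h2'] at hk1
    have h6 : (l ^ k - 1) ^ 2 = 0 := by
      rw [← hk1]; ring
    have h7 : l ^ k = 1 := sub_eq_zero.1 (pow_eq_zero_iff (by norm_num) |>.1 h6)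
    have h8 : l ≠ 1 := by
      rintro rfl
      have h9 : f C.1.trace = f 2 := by
        rw [map_ofNat]
        linear_combination -hl
      have h10 := f.injective h9
      apply hCs
      rw [h10]
      exact ⟨0, by norm_num⟩
    rw [← orderOf_eq_prime h7 h8]
    exact IsPrimitiveRoot.orderOf l
  obtain ⟨l, hl, hlp, hli⟩ := main A hA hAs
  obtain ⟨m, hm, hmp, hmi⟩ := main B hB hBs
  haveI : NeZero k := ⟨hkp.ne_zero⟩
  obtain ⟨i, -, hi⟩ := hlp.eq_pow_of_pow_eq_one hmp.pow_eq_one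
  refine ⟨i, f.injective ?_⟩
  have h1 := hli i
  rw [hi] at h1
  have hm0 : m ≠ 0 := hmp.ne_zero hkp.ne_zero
  exact mul_right_cancel₀ hm0 (by linear_combination hm - h1)

theorem aux_center {K : Type*} [Field K] (A : Matrix.SpecialLinearGroup (Fin 2) K)
    (hA : A ∈ Subgroup.center (Matrix.SpecialLinearGroup (Fin 2) K)) :
    A ^ 2 = 1 ∧ A.1.trace ^ 2 - 4 = 0 := by
  obtain ⟨r, hr, h⟩ := Matrix.SpecialLinearGroup.mem_center_iff.1 hA
  rw [Fintype.card_fin] at hr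
  constructor
  · apply Subtype.ext
    rw [Matrix.SpecialLinearGroup.coe_pow, ← h, ← map_pow, hr, map_one]
    rfl
  · rw [← h]
    simp [Matrix.trace_fin_two]
    linear_combination 4 * hr

theorem aux_card {α β : Type*} [Finite α] [Finite β] (f : α → β)
    (h : ∀ b, ∃ x y, x ≠ y ∧ ∀ a, f a = b ↔ a = x ∨ a = y) : Nat.card α = 2 * Nat.card β := by
  classical
  haveI := Fintype.ofFinite β
  rw [← Nat.card_congr (Equiv.sigmaFiberEquiv f), Nat.card_sigma]
  have : ∀ b, Nat.card {a // f a = b} = 2 := by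
    intro b
    obtain ⟨x, y, hxy, hb⟩ := h b
    rw [Nat.card_eq_two_iff]
    refine ⟨⟨x, (hb x).2 (Or.inl rfl)⟩, ⟨y, (hb y).2 (Or.inr rfl)⟩, ?_, ?_⟩
    · simpa using hxy
    · ext ⟨a, ha⟩
      simpa using (hb a).1 ha
  simp [this, mul_comm]

theorem stmt13 (p k : ℕ) [Fact p.Prime] [Fact k.Prime] (hp : Odd p) (hk : Odd k)
    (hdvd : k ∣ p + 1) :
    Nat.card {H : Subgroup (PSL p) // Nat.card H = k} = (p ^ 2 - p) / 2 := by
  have hkp : k.Prime := Fact.out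
  have hpp : p.Prime := Fact.out
  have h2 : (2 : ZMod p) ≠ 0 := by
    intro h
    have h' : ((2 : ℕ) : ZMod p) = 0 := by exact_mod_cast h
    rw [ZMod.natCast_eq_zero_iff, Nat.prime_dvd_prime_iff_eq hpp Nat.prime_two] at h'
    subst h'
    exact absurd hp (by decide)
  obtain ⟨A0, hA0, hA01⟩ := aux_exists p k hk hdvd
  have hns := aux_nonsq p k h2 hk hdvd A0 hA0 hA01
  obtain ⟨t, ht⟩ : ∃ t, A0.1.trace = t := ⟨_, rfl⟩
  rw [ht] at hns
  -- nothing of trace t is central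
  have hnc : ∀ A : Matrix.SpecialLinearGroup (Fin 2) (ZMod p), A.1.trace = t →
      A ∉ Subgroup.center (Matrix.SpecialLinearGroup (Fin 2) (ZMod p)) := by
    intro A hA hc
    have := (aux_center A hc).2
    rw [hA] at this
    exact hns (this ▸ IsSquare.zero)
  have hpow : ∀ A : Matrix.SpecialLinearGroup (Fin 2) (ZMod p), A.1.trace = t → A ^ k = 1 := by
    intro A hA
    obtain ⟨u, w, huw⟩ := aux_pow t k
    have e0 := huw A0.1 ht A0.2
    have e1 := huw A.1 hA A.2
    have hA0k : A0.1 ^ k = 1 := by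
      rw [← Matrix.SpecialLinearGroup.coe_pow, hA0]; rfl
    rw [hA0k] at e0
    have hu : u = 0 := by
      by_contra hu
      have q00 := congrFun (congrFun e0 0) 0
      have q01 := congrFun (congrFun e0 0) 1
      have q11 := congrFun (congrFun e0 1) 1
      simp at q00 q01 q11
      have hdet := A0.2
      have htr := ht
      rw [Matrix.det_fin_two] at hdet
      rw [Matrix.trace_fin_two] at htr
      have q01' : A0.1 0 1 = 0 := by
        rcases q01 with q | q
        · exact absurd q hu
        · exact q
      have qd : A0.1 0 0 = A0.1 1 1 := mul_left_cancel₀ hu (by linear_combination q11 - q00)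
      apply hns
      refine ⟨0, ?_⟩
      rw [q01', ← qd] at hdet
      rw [← htr, ← qd]
      linear_combination 4 * hdet
    subst hu
    have hw : w = 1 := by
      have q00 := congrFun (congrFun e0 0) 0
      simpa using q00.symm
    subst hw
    apply Subtype.ext
    rw [Matrix.SpecialLinearGroup.coe_pow, e1]
    simp
  let π : Matrix.SpecialLinearGroup (Fin 2) (ZMod p) →* PSL p := QuotientGroup.mk' _
  have hker : ∀ A, π A = 1 ↔ A ∈ Subgroup.center (Matrix.SpecialLinearGroup (Fin 2) (ZMod p)) :=
    fun A => QuotientGroup.eq_one_iff A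
  let f : {A : Matrix.SpecialLinearGroup (Fin 2) (ZMod p) // A.1.trace = t} →
      {H : Subgroup (PSL p) // Nat.card H = k} := fun A =>
    ⟨Subgroup.zpowers (π A.1), by
      rw [Nat.card_zpowers]
      apply orderOf_eq_prime
      · rw [← map_pow, hpow A.1 A.2, map_one]
      · intro h
        exact hnc A.1 A.2 ((hker _).1 h)⟩
  have hsurj : Function.Surjective f := by
    rintro ⟨H, hH⟩
    have hnt : Nontrivial H := by
      have : 1 < Nat.card H := hH ▸ hkp.one_lt
      exact (Finite.one_lt_card_iff_nontrivial).1 this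
    obtain ⟨⟨g, hgH⟩, hg1⟩ := exists_ne (1 : H)
    have hg1' : g ≠ 1 := fun h => hg1 (Subtype.ext h)
    have hgk : g ^ k = 1 := by
      have : (⟨g, hgH⟩ : H) ^ k = 1 := hH ▸ pow_card_eq_one'
      exact congrArg Subtype.val this
    have hog : orderOf g = k := orderOf_eq_prime hgk hg1'
    obtain ⟨A, rfl⟩ := QuotientGroup.mk'_surjective _ g
    change π A ∈ H at hgH
    change π A ^ k = 1 at hgk
    change orderOf (π A) = k at hog
    rw [← map_pow, hker] at hgk
    have hA2 : (A ^ 2) ^ k = 1 := by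
      rw [← pow_mul, mul_comm, pow_mul]
      exact (aux_center _ hgk).1
    have hA21 : A ^ 2 ≠ 1 := by
      intro h
      have h' : π A ^ 2 = 1 := by rw [← map_pow, h, map_one]
      have h3 := orderOf_dvd_of_pow_eq_one h'
      rw [hog, Nat.prime_dvd_prime_iff_eq hkp Nat.prime_two] at h3
      rw [h3] at hk
      exact absurd hk (by decide)
    have hns2 := aux_nonsq p k h2 hk hdvd _ hA2 hA21
    obtain ⟨i, hi⟩ := aux_trace p k (A ^ 2) A0 hA2 hA0 hns2 (by rw [ht]; exact hns)
    rw [ht] at hi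
    refine ⟨⟨(A ^ 2) ^ i, hi⟩, ?_⟩
    apply Subtype.ext
    apply Subgroup.eq_of_le_of_card_ge
    · change Subgroup.zpowers (π ((A ^ 2) ^ i)) ≤ H
      rw [Subgroup.zpowers_le, map_pow, map_pow]
      exact H.pow_mem (H.pow_mem hgH _) _
    · rw [hH, (f ⟨(A ^ 2) ^ i, hi⟩).2]
  have hinv : ∀ A : Matrix.SpecialLinearGroup (Fin 2) (ZMod p), A.1.trace = t →
      (A⁻¹).1.trace = t := by
    intro A hA
    rw [Matrix.trace_fin_two] at hA
    rw [Matrix.SpecialLinearGroup.coe_inv, Matrix.adjugate_fin_two, Matrix.trace_fin_two_of, ← hA,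
      add_comm]
  have hcard := aux_card f (by
    intro H
    obtain ⟨A, rfl⟩ := hsurj H
    refine ⟨A, ⟨A.1⁻¹, hinv _ A.2⟩, ?_, ?_⟩
    · intro h
      have h' : A.1 = A.1⁻¹ := congrArg Subtype.val h
      have h3 : A.1 ^ 2 = 1 := by
        rw [pow_two]; nth_rewrite 2 [h']; exact mul_inv_cancel _
      have h4 := orderOf_dvd_of_pow_eq_one h3
      have h5 := orderOf_eq_prime (hpow _ A.2) (fun h => hnc _ A.2 (h ▸ Subgroup.one_mem _))
      rw [h5, Nat.prime_dvd_prime_iff_eq hkp Nat.prime_two] at h4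
      rw [h4] at hk
      exact absurd hk (by decide)
    · intro B
      constructor
      · intro h
        have h' : Subgroup.zpowers (π B.1) = Subgroup.zpowers (π A.1) := congrArg Subtype.val h
        have hm : π B.1 ∈ Subgroup.zpowers (π A.1) := h' ▸ Subgroup.mem_zpowers _
        obtain ⟨j, hj⟩ := Subgroup.mem_zpowers_iff.1 hm
        have hz : π (B.1 * (A.1 ^ j)⁻¹) = 1 := by
          rw [map_mul, map_inv, map_zpow, hj, mul_inv_cancel]
        rw [hker] at hz
        have hB : B.1 = (B.1 * (A.1 ^ j)⁻¹) * A.1 ^ j := by group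
        have hc : Commute A.1 B.1 := by
          rw [hB]
          exact Commute.mul_right (Subgroup.mem_center_iff.1 hz A.1)
            ((Commute.refl A.1).zpow_right j)
        rcases aux_comm h2 t hns A.1 B.1 A.2 B.2 hc with h | h
        · exact Or.inl (Subtype.ext h)
        · exact Or.inr (Subtype.ext h)
      · rintro (rfl | rfl)
        · rfl
        · apply Subtype.ext
          change Subgroup.zpowers (π (A.1⁻¹)) = Subgroup.zpowers (π A.1)
          rw [map_inv, Subgroup.zpowers_inv])
  rw [aux_count p t hns] at hcard
  have : p ^ 2 - p = p * (p - 1) := by rw [Nat.mul_sub, mul_one, pow_two]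
  rw [this, hcard]
  simp
end
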